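/- Let Φ : L(X) → L(Y) with dim(Y) = 1, so there is a unique operator A ∈ L(X) with Φ(X) = ⟨A, X⟩ for all X (where ⟨A,X⟩ = tr(A*X)). Then the diamond norm of Φ equals the operator norm of A: sup over finite-dimensional W and unit-trace-norm operators ρ on X ⊗ W of ‖(Φ ⊗ id_W)(ρ)‖₁ equals ‖A‖. -/

import Mathlib

open Matrix
open scoped ComplexOrder

/-- The trace norm (sum of singular values) of a complex matrix. -/
noncomputable def traceNorm {n : Type*} [Fintype n] [DecidableEq n]
    (A : Matrix n n ℂ) : ℝ :=
  ∑ i, Real.sqrt ((Matrix.posSemidef_conjTranspose_mul_self A).isHermitian.eigenvalues i)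

/-- The operator (spectral) norm of a complex matrix. -/
noncomputable def opNorm {n : Type*} [Fintype n] [DecidableEq n] (A : Matrix n n ℂ) : ℝ :=
  ‖Matrix.toEuclideanCLM (𝕜 := ℂ) A‖

/-- `(Φ ⊗ id_W)(ξ)` for the scalar-output super-operator `Φ(X) = tr(Aᴴ X)`:
the operator on `W` obtained by applying `Φ` blockwise. -/
noncomputable def phiTensorIdApply {dx dw : ℕ} (A : Matrix (Fin dx) (Fin dx) ℂ)
    (ξ : Matrix (Fin dx × Fin dw) (Fin dx × Fin dw) ℂ) :
    Matrix (Fin dw) (Fin dw) ℂ :=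
  Matrix.of fun w w' => ∑ x' : Fin dx, ∑ x : Fin dx, star (A x' x) * ξ (x', w) (x, w')

/-!
The trace norm is dual to the operator norm: `|tr (C B)| ≤ ‖C‖ ‖B‖₁`, with equality for some
contraction `C`. Since `tr (U (Φ ⊗ id)(ξ)) = tr ((Aᴴ ⊗ U) ξ)` and `‖Aᴴ ⊗ U‖ ≤ ‖A‖ ‖U‖`, duality gives
`‖(Φ ⊗ id)(ξ)‖₁ ≤ ‖A‖ ‖ξ‖₁`. Conversely, the rank-one operator `ξ = y xᴴ` with unit vectors `x`, `y`
already yields `|⟨A x, y⟩|` when `W` is one-dimensional.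
-/

open scoped Kronecker InnerProductSpace Matrix.Norms.L2Operator

section EuclideanCLM

variable {𝕜 n : Type*} [RCLike 𝕜] [Fintype n] [DecidableEq n]

theorem trace_eq_sum_inner_toEuclideanCLM {ι : Type*} [Fintype ι]
    (M : Matrix n n 𝕜) (b : OrthonormalBasis ι 𝕜 (EuclideanSpace 𝕜 n)) :
    M.trace = ∑ i, ⟪b i, toEuclideanCLM (𝕜 := 𝕜) M (b i)⟫_𝕜 := by
  have htrace : LinearMap.trace 𝕜 _ (toEuclideanLin M) = M.trace := by
    rw [toEuclideanLin_eq_toLin_orthonormal, LinearMap.trace_eq_matrix_trace 𝕜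
      (EuclideanSpace.basisFun n 𝕜).toBasis, LinearMap.toMatrix_toLin]
  rw [← htrace, LinearMap.trace_eq_sum_inner _ b]
  rfl

theorem inner_toEuclideanCLM_conjTranspose (M : Matrix n n 𝕜) (x y : EuclideanSpace 𝕜 n) :
    ⟪x, toEuclideanCLM (𝕜 := 𝕜) Mᴴ y⟫_𝕜 = ⟪toEuclideanCLM (𝕜 := 𝕜) M x, y⟫_𝕜 := by
  rw [← star_eq_conjTranspose, map_star, ContinuousLinearMap.star_eq_adjoint,
    ContinuousLinearMap.adjoint_inner_right]

theorem toEuclideanCLM_vecMulVec_star (u v : EuclideanSpace 𝕜 n) :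
    toEuclideanCLM (𝕜 := 𝕜) (vecMulVec u (star v)) = InnerProductSpace.rankOne 𝕜 u v := by
  ext1 x
  rw [← InnerProductSpace.symm_toEuclideanLin_rankOne]
  exact DFunLike.congr_fun (toEuclideanLin.apply_symm_apply _) x

theorem trace_mul_vecMulVec_star (M : Matrix n n 𝕜) (u v : EuclideanSpace 𝕜 n) :
    (M * vecMulVec u (star v)).trace = ⟪v, toEuclideanCLM (𝕜 := 𝕜) M u⟫_𝕜 := by
  rw [mul_vecMulVec, trace_vecMulVec, EuclideanSpace.inner_eq_star_dotProduct,
    ofLp_toEuclideanCLM]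

theorem trace_cfc_eq_sum_eigenvalues {M : Matrix n n 𝕜} (hM : M.IsHermitian) (f : ℝ → ℝ) :
    (cfc f M).trace = ∑ i, (f (hM.eigenvalues i) : 𝕜) := by
  rw [hM.cfc_eq, Matrix.IsHermitian.cfc, Unitary.conjStarAlgAut_apply, trace_mul_comm,
    ← Matrix.mul_assoc, Unitary.coe_star_mul_self, Matrix.one_mul, trace_diagonal]
  rfl

theorem norm_toEuclideanCLM_eigenvectorBasis {B : Matrix n n 𝕜} (h : (Bᴴ * B).IsHermitian)
    (i : n) : ‖toEuclideanCLM (𝕜 := 𝕜) B (h.eigenvectorBasis i)‖ = √(h.eigenvalues i) := by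
  have hinner : ⟪h.eigenvectorBasis i, toEuclideanCLM (𝕜 := 𝕜) (Bᴴ * B) (h.eigenvectorBasis i)⟫_𝕜 =
      star ⇑(h.eigenvectorBasis i) ⬝ᵥ (Bᴴ * B) *ᵥ ⇑(h.eigenvectorBasis i) := by
    rw [EuclideanSpace.inner_eq_star_dotProduct, ofLp_toEuclideanCLM, dotProduct_comm]
  rw [h.eigenvalues_eq, ← hinner, map_mul, mul_apply_eq_comp,
    inner_toEuclideanCLM_conjTranspose, ← norm_sq_eq_re_inner (𝕜 := 𝕜),
    Real.sqrt_sq (norm_nonneg _)]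

end EuclideanCLM

section TraceNorm

variable {n : Type*} [Fintype n] [DecidableEq n]

theorem traceNorm_nonneg (B : Matrix n n ℂ) : 0 ≤ traceNorm B :=
  Finset.sum_nonneg fun _ _ ↦ Real.sqrt_nonneg _

theorem traceNorm_eq_trace_cfc_sqrt (B : Matrix n n ℂ) :
    (traceNorm B : ℂ) = (cfc Real.sqrt (Bᴴ * B)).trace := by
  rw [trace_cfc_eq_sum_eigenvalues (posSemidef_conjTranspose_mul_self B).isHermitian, traceNorm,
    Complex.ofReal_sum]
  rfl

theorem norm_trace_mul_le_norm_mul_traceNorm (C B : Matrix n n ℂ) :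
    ‖(C * B).trace‖ ≤ ‖C‖ * traceNorm B := by
  have h := (posSemidef_conjTranspose_mul_self B).isHermitian
  let v := h.eigenvectorBasis
  let S := toEuclideanCLM (𝕜 := ℂ) C
  let T := toEuclideanCLM (𝕜 := ℂ) B
  have hterm (i : n) : ‖⟪v i, S (T (v i))⟫_ℂ‖ ≤ ‖C‖ * √(h.eigenvalues i) :=
    calc ‖⟪v i, S (T (v i))⟫_ℂ‖ ≤ ‖v i‖ * ‖S (T (v i))‖ := norm_inner_le_norm _ _
      _ = ‖S (T (v i))‖ := by rw [v.norm_eq_one, one_mul]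
      _ ≤ ‖C‖ * ‖T (v i)‖ := S.le_opNorm _
      _ = ‖C‖ * √(h.eigenvalues i) := by rw [norm_toEuclideanCLM_eigenvectorBasis h]
  rw [trace_eq_sum_inner_toEuclideanCLM (C * B) v, map_mul, traceNorm, Finset.mul_sum]
  exact norm_sum_le_of_le _ fun i _ ↦ hterm i

theorem norm_trace_le_traceNorm (B : Matrix n n ℂ) : ‖B.trace‖ ≤ traceNorm B := by
  have hone : ‖(1 : Matrix n n ℂ)‖ ≤ 1 := by
    rw [cstar_norm_def, map_one]
    exact ContinuousLinearMap.norm_id_le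
  calc ‖B.trace‖ = ‖(1 * B).trace‖ := by rw [Matrix.one_mul]
    _ ≤ ‖(1 : Matrix n n ℂ)‖ * traceNorm B := norm_trace_mul_le_norm_mul_traceNorm 1 B
    _ ≤ traceNorm B := mul_le_of_le_one_left (traceNorm_nonneg B) hone

theorem exists_norm_le_one_trace_mul_eq_traceNorm (B : Matrix n n ℂ) :
    ∃ U : Matrix n n ℂ, ‖U‖ ≤ 1 ∧ (U * B).trace = traceNorm B := by
  have hsa : IsSelfAdjoint (Bᴴ * B) := (posSemidef_conjTranspose_mul_self B).isHermitian
  have hcont (f : ℝ → ℝ) : ContinuousOn f (spectrum ℝ (Bᴴ * B)) :=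
    finite_real_spectrum.continuousOn f
  -- As `0⁻¹ = 0`, `E` is the pseudo-inverse of `|B|`, and `E * Bᴴ` is the adjoint of the partial
  -- isometry in the polar decomposition of `B`.
  set E := cfc (fun x ↦ (√x)⁻¹) (Bᴴ * B) with hE
  have hEsa : Eᴴ = E := (cfc_predicate (R := ℝ) _ _ : IsSelfAdjoint E)
  refine ⟨E * Bᴴ, ?_, ?_⟩
  · have hUU : E * Bᴴ * (E * Bᴴ)ᴴ = cfc (fun x ↦ (√x)⁻¹ * x * (√x)⁻¹) (Bᴴ * B) := by
      rw [cfc_mul _ _ _ (hcont _) (hcont _), cfc_mul _ _ _ (hcont _) (hcont _), cfc_id' ℝ (Bᴴ * B),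
        conjTranspose_mul, conjTranspose_conjTranspose, hEsa]
      simp only [Matrix.mul_assoc, hE]
    have hsq : ‖E * Bᴴ‖ ^ 2 ≤ 1 := by
      rw [pow_two, ← CStarRing.norm_self_mul_star, star_eq_conjTranspose, hUU]
      refine norm_cfc_le zero_le_one fun x _ ↦ ?_
      rw [inv_mul_eq_div, Real.div_sqrt, Real.norm_of_nonneg (by positivity)]
      exact mul_inv_le_one
    exact (sq_le_one_iff₀ (norm_nonneg _)).1 hsq
  · rw [traceNorm_eq_trace_cfc_sqrt, Matrix.mul_assoc]
    calc (E * (Bᴴ * B)).trace = (cfc (fun x ↦ (√x)⁻¹ * x) (Bᴴ * B)).trace := by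
          rw [cfc_mul _ _ _ (hcont _) (hcont _), cfc_id' ℝ (Bᴴ * B)]
      _ = (cfc Real.sqrt (Bᴴ * B)).trace := by simp only [inv_mul_eq_div, Real.div_sqrt]

theorem traceNorm_vecMulVec_star (u v : EuclideanSpace ℂ n) :
    traceNorm (vecMulVec u (star v)) = ‖u‖ * ‖v‖ := by
  set B := vecMulVec u (star v)
  apply le_antisymm
  · obtain ⟨U, hU, htr⟩ := exists_norm_le_one_trace_mul_eq_traceNorm B
    rw [trace_mul_vecMulVec_star] at htr
    calc traceNorm B = ‖⟪v, toEuclideanCLM (𝕜 := ℂ) U u⟫_ℂ‖ := by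
          rw [htr, Complex.norm_of_nonneg (traceNorm_nonneg _)]
      _ ≤ ‖v‖ * (‖U‖ * ‖u‖) := (norm_inner_le_norm _ _).trans <| by
          gcongr; exact ContinuousLinearMap.le_opNorm _ _
      _ ≤ ‖u‖ * ‖v‖ := by
          rw [mul_comm]; gcongr; exact mul_le_of_le_one_left (norm_nonneg _) hU
  · set C := vecMulVec v (star u)
    have hC : ‖C‖ = ‖u‖ * ‖v‖ := by
      rw [cstar_norm_def, toEuclideanCLM_vecMulVec_star, InnerProductSpace.norm_rankOne, mul_comm]
    have htr : ‖(C * B).trace‖ = (‖u‖ * ‖v‖) * (‖u‖ * ‖v‖) := by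
      rw [trace_mul_vecMulVec_star, toEuclideanCLM_vecMulVec_star]
      simp only [InnerProductSpace.rankOne_apply, inner_smul_right, inner_self_eq_norm_sq_to_K,
        norm_mul, norm_pow, RCLike.norm_ofReal, abs_norm]
      ring
    have hle := norm_trace_mul_le_norm_mul_traceNorm C B
    rw [htr, hC] at hle
    obtain h0 | hpos := (by positivity : 0 ≤ ‖u‖ * ‖v‖).eq_or_lt
    · exact h0 ▸ traceNorm_nonneg B
    · exact le_of_mul_le_mul_left hle hpos

end TraceNorm

section Kronecker

variable {m n : Type*} [Fintype m] [DecidableEq m] [Fintype n] [DecidableEq n]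

theorem norm_kronecker_one_le (A : Matrix m m ℂ) : ‖A ⊗ₖ (1 : Matrix n n ℂ)‖ ≤ ‖A‖ := by
  let φ : Matrix m m ℂ →⋆ₙₐ[ℂ] Matrix (m × n) (m × n) ℂ :=
    { toFun A := A ⊗ₖ 1
      map_smul' _ _ := smul_kronecker _ _ _
      map_zero' := zero_kronecker _
      map_add' _ _ := add_kronecker _ _ _
      map_mul' _ _ := by rw [← mul_kronecker_mul, Matrix.mul_one]
      map_star' _ := by
        simp only [star_eq_conjTranspose, conjTranspose_kronecker, conjTranspose_one] }
  exact NonUnitalStarAlgHom.norm_apply_le φ A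

theorem norm_one_kronecker_le (B : Matrix n n ℂ) : ‖(1 : Matrix m m ℂ) ⊗ₖ B‖ ≤ ‖B‖ := by
  let φ : Matrix n n ℂ →⋆ₙₐ[ℂ] Matrix (m × n) (m × n) ℂ :=
    { toFun B := 1 ⊗ₖ B
      map_smul' _ _ := kronecker_smul _ _ _
      map_zero' := kronecker_zero _
      map_add' _ _ := kronecker_add _ _ _
      map_mul' _ _ := by rw [← mul_kronecker_mul, Matrix.mul_one]
      map_star' _ := by
        simp only [star_eq_conjTranspose, conjTranspose_kronecker, conjTranspose_one] }
  exact NonUnitalStarAlgHom.norm_apply_le φ B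

theorem norm_kronecker_le (A : Matrix m m ℂ) (B : Matrix n n ℂ) : ‖A ⊗ₖ B‖ ≤ ‖A‖ * ‖B‖ :=
  calc ‖A ⊗ₖ B‖ = ‖(A ⊗ₖ (1 : Matrix n n ℂ)) * ((1 : Matrix m m ℂ) ⊗ₖ B)‖ := by
        rw [← mul_kronecker_mul, Matrix.mul_one, Matrix.one_mul]
    _ ≤ ‖A ⊗ₖ (1 : Matrix n n ℂ)‖ * ‖(1 : Matrix m m ℂ) ⊗ₖ B‖ := norm_mul_le _ _
    _ ≤ ‖A‖ * ‖B‖ := by gcongr; exacts [norm_kronecker_one_le A, norm_one_kronecker_le B]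

end Kronecker

section Functional

variable {dx dw : ℕ} (A : Matrix (Fin dx) (Fin dx) ℂ)

theorem trace_mul_phiTensorIdApply (U : Matrix (Fin dw) (Fin dw) ℂ)
    (ξ : Matrix (Fin dx × Fin dw) (Fin dx × Fin dw) ℂ) :
    (U * phiTensorIdApply A ξ).trace = ((Aᴴ ⊗ₖ U) * ξ).trace := by
  simp only [Matrix.trace, Matrix.diag_apply, Matrix.mul_apply, phiTensorIdApply, Matrix.of_apply,
    Fintype.sum_prod_type, kroneckerMap_apply, conjTranspose_apply, Finset.mul_sum]
  rw [Finset.sum_comm (s := (Finset.univ : Finset (Fin dx)))]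
  refine Finset.sum_congr rfl fun w _ ↦ ?_
  rw [Finset.sum_comm_cycle]
  refine Finset.sum_congr rfl fun x _ ↦ ?_
  rw [Finset.sum_comm]
  refine Finset.sum_congr rfl fun x' _ ↦ Finset.sum_congr rfl fun w' _ ↦ ?_
  ring

theorem traceNorm_phiTensorIdApply_le (ξ : Matrix (Fin dx × Fin dw) (Fin dx × Fin dw) ℂ) :
    traceNorm (phiTensorIdApply A ξ) ≤ opNorm A * traceNorm ξ := by
  obtain ⟨U, hU, htr⟩ := exists_norm_le_one_trace_mul_eq_traceNorm (phiTensorIdApply A ξ)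
  have hnorm : ‖Aᴴ ⊗ₖ U‖ ≤ opNorm A :=
    calc ‖Aᴴ ⊗ₖ U‖ ≤ ‖Aᴴ‖ * ‖U‖ := norm_kronecker_le _ _
      _ ≤ ‖Aᴴ‖ := mul_le_of_le_one_right (norm_nonneg _) hU
      _ = opNorm A := l2_opNorm_conjTranspose A
  calc traceNorm (phiTensorIdApply A ξ) = ‖((Aᴴ ⊗ₖ U) * ξ).trace‖ := by
        rw [← trace_mul_phiTensorIdApply, htr, Complex.norm_of_nonneg (traceNorm_nonneg _)]
    _ ≤ ‖Aᴴ ⊗ₖ U‖ * traceNorm ξ := norm_trace_mul_le_norm_mul_traceNorm _ _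
    _ ≤ opNorm A * traceNorm ξ := by gcongr; exact traceNorm_nonneg ξ

theorem exists_re_inner_le_traceNorm_phiTensorIdApply
    {x y : EuclideanSpace ℂ (Fin dx)} (hx : ‖x‖ = 1) (hy : ‖y‖ = 1) :
    ∃ ξ : Matrix (Fin dx × Fin 1) (Fin dx × Fin 1) ℂ, traceNorm ξ = 1 ∧
      (⟪toEuclideanCLM (𝕜 := ℂ) A x, y⟫_ℂ).re ≤ traceNorm (phiTensorIdApply A ξ) := by
  let x' : EuclideanSpace ℂ (Fin dx × Fin 1) := WithLp.toLp 2 fun p ↦ x p.1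
  let y' : EuclideanSpace ℂ (Fin dx × Fin 1) := WithLp.toLp 2 fun p ↦ y p.1
  have hx' : ‖x'‖ = 1 := by
    rw [← hx]; simp [EuclideanSpace.norm_eq, Fintype.sum_prod_type, x']
  have hy' : ‖y'‖ = 1 := by
    rw [← hy]; simp [EuclideanSpace.norm_eq, Fintype.sum_prod_type, y']
  refine ⟨vecMulVec y' (star x'), by rw [traceNorm_vecMulVec_star, hx', hy', one_mul], ?_⟩
  have hinner : (phiTensorIdApply A (vecMulVec y' (star x'))).trace =
      ⟪toEuclideanCLM (𝕜 := ℂ) A x, y⟫_ℂ := by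
    rw [← Matrix.one_mul (phiTensorIdApply _ _), trace_mul_phiTensorIdApply,
      trace_mul_vecMulVec_star, ← inner_toEuclideanCLM_conjTranspose]
    simp [PiLp.inner_apply, Fintype.sum_prod_type, x', y', mulVec, dotProduct]
  exact hinner ▸ (Complex.re_le_norm _).trans (norm_trace_le_traceNorm _)

end Functional

/-- For `Φ : L(X) → L(Y)` with `dim Y = 1`, represented by `Φ(X) = ⟨A, X⟩ = tr(Aᴴ X)`,
the diamond norm of `Φ` — the supremum over finite-dimensional `W` and operators `ξ` on
`X ⊗ W` of unit trace norm of `‖(Φ ⊗ id_W)(ξ)‖₁` — equals the operator norm `‖A‖`. -/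
theorem diamondNorm_of_functional {dx : ℕ} (A : Matrix (Fin dx) (Fin dx) ℂ) :
    sSup {r : ℝ | ∃ (dw : ℕ) (ξ : Matrix (Fin dx × Fin dw) (Fin dx × Fin dw) ℂ),
        traceNorm ξ = 1 ∧ r = traceNorm (phiTensorIdApply A ξ)} = opNorm A := by
  have hle : ∀ r ∈ {r : ℝ | ∃ (dw : ℕ) (ξ : Matrix (Fin dx × Fin dw) (Fin dx × Fin dw) ℂ),
      traceNorm ξ = 1 ∧ r = traceNorm (phiTensorIdApply A ξ)}, 0 ≤ r ∧ r ≤ opNorm A := by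
    rintro _ ⟨dw, ξ, hξ, rfl⟩
    exact ⟨traceNorm_nonneg _, by simpa [hξ] using traceNorm_phiTensorIdApply_le A ξ⟩
  refine le_antisymm (Real.sSup_le (fun r hr ↦ (hle r hr).2) (norm_nonneg _)) ?_
  refine ContinuousLinearMap.opNorm_le_of_re_inner_le (Real.sSup_nonneg fun r hr ↦ (hle r hr).1)
    fun x y hx hy ↦ ?_
  obtain ⟨ξ, hξ, hinner⟩ := exists_re_inner_le_traceNorm_phiTensorIdApply A hx hy
  exact hinner.trans (le_csSup ⟨opNorm A, fun r hr ↦ (hle r hr).2⟩ ⟨1, ξ, hξ, rfl⟩)
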